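/- Let A and B be finite-dimensional Hermitian matrices, let ω and Ω be sets of eigenvalues of A and B respectively with dist(ω, Ω) = δ > 0, and let P, Q be the orthogonal (spectral) projections of A and B onto the eigenspaces corresponding to ω and Ω. Then the operator X = P Q restricted appropriately solves the Sylvester equation X B_Ω − A_ω X = P (B − A) Q, and consequently δ·‖P Q‖ ≤ (π/2)·‖B − A‖. -/

import Mathlib

open Real Classical

/-- The spectral projection of a Hermitian matrix `A` associated with a set
`ω ⊆ ℝ`: `U diag(χ_ω(λᵢ)) U*`, where `A = U diag(λ) U*` is the spectral
decomposition of `A`. -/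
noncomputable def spectralProj {m : ℕ} {A : Matrix (Fin m) (Fin m) ℂ}
    (hA : A.IsHermitian) (ω : Set ℝ) : Matrix (Fin m) (Fin m) ℂ :=
  (hA.eigenvectorUnitary : Matrix (Fin m) (Fin m) ℂ) *
    Matrix.diagonal (fun i => if hA.eigenvalues i ∈ ω then (1 : ℂ) else 0) *
    star (hA.eigenvectorUnitary : Matrix (Fin m) (Fin m) ℂ)

/-!
The product `X = PQ` solves `X B - A X = P (B - A) Q =: C`. In eigenbases of `A` and `B` this reads
`(b j - a i) * X i j = C i j`, and `X i j` vanishes unless `|b j - a i| ≥ δ`. After rescaling to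
`δ = 1`, a function `k` on `(0, ∞)` with `∫ k t * sin (s * t) = 1 / s` for all `|s| ≥ 1` therefore
recovers `X` as `∫ k t • S t`, where `S t` has entries `sin (t * (b j - a i)) * C i j`. Writing the
sine as a difference of exponentials shows `‖S t‖ ≤ ‖C‖`, so `‖X‖ ≤ ‖k‖₁ * ‖C‖`.

Following Sz.-Nagy, take `k t = sin t * ∫ exp (-u * t) * tanh (π * u / 2) du` over `u > 0`. The
Laplace transform of `|sin|` at `u` is `1 / ((1 + u ^ 2) * tanh (π * u / 2))`, so
`‖k‖₁ = ∫ (1 + u ^ 2)⁻¹ du = π / 2`. The sine transform of `k` is computed from the partial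
fractions of `tanh`: the `j`-th of them contributes `1 / (s + 2 * j) - 1 / (s + 2 * (j + 1))` when
`s ≥ 1`, and these terms telescope to `1 / s`.
-/

open MeasureTheory Set Filter Topology

section PartialFractions

lemma hasSum_coth {u : ℝ} (hu : u ≠ 0) :
    HasSum (fun n : ℕ ↦ 2 * u / (u ^ 2 + (n + 1) ^ 2))
      (π * (cosh (π * u) / sinh (π * u)) - 1 / u) := by
  have hu' : (u : ℂ) ≠ 0 := mod_cast hu
  have hmem : Complex.I * (u : ℂ) ∈ Complex.integerComplement := by
    rintro ⟨n, hn⟩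
    exact hu (by simpa using (congrArg Complex.im hn).symm)
  have hterm (n : ℕ) : ((2 * u / (u ^ 2 + (n + 1) ^ 2) : ℝ) : ℂ) =
      Complex.I * cotTerm (Complex.I * u) n := by
    have hden : ((u : ℂ) ^ 2 + ((n : ℂ) + 1) ^ 2) ≠ 0 := by
      exact_mod_cast (by positivity : u ^ 2 + ((n : ℝ) + 1) ^ 2 ≠ 0)
    have hfactor : (Complex.I * u + (n + 1)) * (Complex.I * u - (n + 1)) =
        -((u : ℂ) ^ 2 + ((n : ℂ) + 1) ^ 2) := by
      linear_combination (u : ℂ) ^ 2 * Complex.I_sq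
    rw [cotTerm_identity hmem, hfactor]
    push_cast
    field_simp
    linear_combination Complex.I_sq
  have hsum : ((π * (cosh (π * u) / sinh (π * u)) - 1 / u : ℝ) : ℂ) =
      Complex.I * ∑' n, cotTerm (Complex.I * u) n := by
    have hsinh : Complex.sinh (π * u) ≠ 0 := by
      exact_mod_cast sinh_eq_zero.not.mpr (mul_ne_zero pi_ne_zero hu)
    rw [← cot_series_rep' hmem, show π * (Complex.I * u) = π * u * Complex.I by ring,
      Complex.cot_eq_cos_div_sin, Complex.cos_mul_I, Complex.sin_mul_I]
    push_cast
    field_simp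
  rw [← Complex.hasSum_ofReal, hsum, funext hterm]
  exact (summable_cotTerm hmem).hasSum.mul_left _

lemma tanh_eq_two_mul_coth_two_mul_sub_coth {x : ℝ} (hx : x ≠ 0) :
    tanh x = 2 * (cosh (2 * x) / sinh (2 * x)) - cosh x / sinh x := by
  have hsinh : sinh x ≠ 0 := sinh_eq_zero.not.mpr hx
  have hcosh : cosh x ≠ 0 := (cosh_pos x).ne'
  rw [tanh_eq_sinh_div_cosh, cosh_two_mul, sinh_two_mul]
  field_simp
  ring

lemma hasSum_tanh (u : ℝ) :
    HasSum (fun k : ℕ ↦ 4 / π * (u / (u ^ 2 + (2 * k + 1) ^ 2))) (tanh (π * u / 2)) := by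
  rcases eq_or_ne u 0 with rfl | hu
  · simp
  set f : ℕ → ℝ := fun n ↦ 2 * u / (u ^ 2 + (n + 1) ^ 2)
  have hall : HasSum f _ := hasSum_coth hu
  have hodd_term (k : ℕ) : f (2 * k + 1) = 1 / 2 * (2 * (u / 2) / ((u / 2) ^ 2 + (k + 1) ^ 2)) := by
    simp only [f]
    push_cast
    field_simp
    ring
  have heven_term (k : ℕ) : 4 / π * (u / (u ^ 2 + (2 * k + 1) ^ 2)) = 2 / π * f (2 * k) := by
    simp only [f]
    push_cast
    ring
  have hodd : HasSum (fun k ↦ f (2 * k + 1))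
      (1 / 2 * (π * (cosh (π * (u / 2)) / sinh (π * (u / 2))) - 1 / (u / 2))) := by
    simp only [hodd_term]
    exact (hasSum_coth (div_ne_zero hu two_ne_zero)).mul_left _
  have heven : Summable fun k ↦ f (2 * k) :=
    hall.summable.comp_injective (mul_right_injective₀ two_ne_zero)
  have hsplit := (heven.hasSum.even_add_odd hodd).unique hall
  have hvalue : 2 / π * ∑' k, f (2 * k) = tanh (π * u / 2) := by
    rw [eq_sub_of_add_eq hsplit, mul_div_assoc,
      tanh_eq_two_mul_coth_two_mul_sub_coth (x := π * (u / 2)) (by positivity),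
      show 2 * (π * (u / 2)) = π * u by ring]
    field_simp
    ring
  rw [← hvalue]
  simp only [heven_term]
  exact heven.hasSum.mul_left _

end PartialFractions

section LaplaceIntegrals

lemma tanh_pos_of_pos {x : ℝ} (hx : 0 < x) : 0 < tanh x := by
  rw [tanh_eq_sinh_div_cosh]
  exact div_pos (sinh_pos_iff.mpr hx) (cosh_pos x)

lemma tanh_eq_one_sub_exp_div_one_add_exp (x : ℝ) :
    tanh x = (1 - rexp (-(2 * x))) / (1 + rexp (-(2 * x))) := by
  have hexp : rexp (-(2 * x)) = rexp (-x) / rexp x := by rw [← exp_sub]; congr 1; ring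
  rw [tanh_eq, hexp]
  field_simp

lemma integral_sin_mul_exp_zero_pi (u : ℝ) :
    ∫ t in 0..π, sin t * rexp (-u * t) = (1 + rexp (-u * π)) / (1 + u ^ 2) := by
  have hden : 1 + u ^ 2 ≠ 0 := by positivity
  have hderiv (t : ℝ) : HasDerivAt
      (fun t ↦ -(cos t + u * sin t) * rexp (-u * t) / (1 + u ^ 2)) (sin t * rexp (-u * t)) t := by
    have hexp : HasDerivAt (fun t ↦ rexp (-u * t)) (rexp (-u * t) * (-u * 1)) t :=
      ((hasDerivAt_id t).const_mul (-u)).exp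
    have htrig := ((hasDerivAt_cos t).add ((hasDerivAt_sin t).const_mul u)).neg
    refine ((htrig.mul hexp).div_const (1 + u ^ 2)).congr_deriv ?_
    simp only [Pi.add_apply, Pi.neg_apply]
    field_simp
    ring
  rw [intervalIntegral.integral_eq_sub_of_hasDerivAt (fun t _ ↦ hderiv t)
    (Continuous.intervalIntegrable (by fun_prop) _ _)]
  simp only [cos_pi, sin_pi, cos_zero, sin_zero, mul_zero, exp_zero]
  ring

lemma integrableOn_abs_sin_mul_exp {u : ℝ} (hu : 0 < u) :
    IntegrableOn (fun t ↦ |sin t| * rexp (-u * t)) (Ioi 0) := by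
  refine (integrableOn_exp_mul_Ioi (neg_neg_of_pos hu) 0).bdd_mul (c := 1)
    (by fun_prop) (ae_of_all _ fun t ↦ ?_)
  simpa using abs_sin_le_one t

-- `|sin|` is `π`-periodic, so shifting by `π` multiplies the integral by `exp (-uπ)`.
lemma integral_abs_sin_mul_exp_Ioi {u : ℝ} (hu : 0 < u) :
    ∫ t in Ioi 0, |sin t| * rexp (-u * t) = (tanh (π * u / 2) * (1 + u ^ 2))⁻¹ := by
  set J := ∫ t in Ioi 0, |sin t| * rexp (-u * t)
  have hint := integrableOn_abs_sin_mul_exp hu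
  have hperiod : ∫ t in 0..π, |sin t| * rexp (-u * t) =
      (1 + rexp (-u * π)) / (1 + u ^ 2) := by
    rw [← integral_sin_mul_exp_zero_pi]
    refine intervalIntegral.integral_congr fun t ht ↦ ?_
    rw [uIcc_of_le pi_pos.le] at ht
    simp only [abs_of_nonneg (sin_nonneg_of_mem_Icc ht)]
  have hshift : ∫ t in Ioi π, |sin t| * rexp (-u * t) = rexp (-u * π) * J := by
    have hpre : (fun t : ℝ ↦ t + π) ⁻¹' Ioi π = Ioi 0 := by simp
    rw [← (measurePreserving_add_right volume π).setIntegral_preimage_emb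
      (measurableEmbedding_addRight π), hpre, ← integral_const_mul]
    simp only [sin_add_pi, abs_neg, mul_add, exp_add]
    congr 1 with t
    ring
  have hsplit : (1 + rexp (-u * π)) / (1 + u ^ 2) + rexp (-u * π) * J = J := by
    rw [← hperiod, ← hshift]
    exact intervalIntegral.integral_interval_add_Ioi hint
      (hint.mono_set (Ioi_subset_Ioi pi_pos.le))
  have htanh : tanh (π * u / 2) = (1 - rexp (-u * π)) / (1 + rexp (-u * π)) := by
    rw [tanh_eq_one_sub_exp_div_one_add_exp, show -(2 * (π * u / 2)) = -u * π by ring]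
  have hexp : 0 < 1 - rexp (-u * π) := by
    rw [sub_pos, exp_lt_one_iff]
    nlinarith [pi_pos]
  have hJ : J = (1 + rexp (-u * π)) / (1 + u ^ 2) / (1 - rexp (-u * π)) := by
    rw [eq_div_iff hexp.ne']
    linear_combination -hsplit
  rw [hJ, htanh]
  field_simp

lemma integral_cos_mul_exp_Ioi {u : ℝ} (hu : 0 < u) (c : ℝ) :
    ∫ t in Ioi 0, cos (c * t) * rexp (-u * t) = u / (u ^ 2 + c ^ 2) := by
  have hre : ((-u : ℂ) + c * Complex.I).re < 0 := by simpa using hu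
  have hreal (t : ℝ) : RCLike.re (Complex.exp ((-u + c * Complex.I) * t)) =
      cos (c * t) * rexp (-u * t) := by
    simp [Complex.exp_re, mul_comm]
  have h := integral_re (integrableOn_exp_mul_complex_Ioi hre 0)
  simp only [hreal, integral_exp_mul_complex_Ioi hre 0] at h
  rw [h]
  simp [Complex.div_re, Complex.normSq_apply, pow_two]

lemma integrableOn_cos_mul_exp_Ioi {u : ℝ} (hu : 0 < u) (c : ℝ) :
    IntegrableOn (fun t ↦ cos (c * t) * rexp (-u * t)) (Ioi 0) :=
  .of_integral_ne_zero (by rw [integral_cos_mul_exp_Ioi hu]; positivity)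

end LaplaceIntegrals

section RationalIntegrals

variable {k c : ℝ}

lemma hasDerivAt_mul_arctan_div (c x : ℝ) :
    HasDerivAt (fun u ↦ c * arctan (u / c)) (c ^ 2 / (x ^ 2 + c ^ 2)) x := by
  rcases eq_or_ne c 0 with rfl | hc
  · simpa using hasDerivAt_const x (0 : ℝ)
  · refine (((hasDerivAt_id x).div_const c).arctan.const_mul c).congr_deriv ?_
    simp only [id]
    field_simp
    ring

lemma tendsto_mul_arctan_div_atTop (hc : 0 ≤ c) :
    Tendsto (fun u ↦ c * arctan (u / c)) atTop (𝓝 (c * (π / 2))) := by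
  rcases hc.eq_or_lt with rfl | hc
  · simp
  · exact ((tendsto_arctan_atTop.mono_right nhdsWithin_le_nhds).comp
      (tendsto_id.atTop_div_const hc)).const_mul c

lemma hasDerivAt_div_two_mul_sq_add_sq (hk : k ≠ 0) (x : ℝ) :
    HasDerivAt (fun u ↦ u / (2 * (u ^ 2 + k ^ 2)))
      ((k ^ 2 - x ^ 2) / (2 * (x ^ 2 + k ^ 2) ^ 2)) x := by
  have hden := (((hasDerivAt_id x).pow 2).add_const (k ^ 2)).const_mul 2
  refine ((hasDerivAt_id x).div hden (by simp only [id, Pi.pow_apply]; positivity)).congr_deriv ?_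
  simp only [id, Pi.pow_apply]
  field_simp
  ring

lemma tendsto_div_two_mul_sq_add_sq_atTop (k : ℝ) :
    Tendsto (fun u : ℝ ↦ u / (2 * (u ^ 2 + k ^ 2))) atTop (𝓝 0) := by
  refine squeeze_zero' ?_ ?_ tendsto_inv_atTop_zero
  · filter_upwards [eventually_gt_atTop 0] with u hu
    positivity
  · filter_upwards [eventually_gt_atTop 0] with u hu
    rw [div_le_iff₀ (by positivity), ← div_eq_inv_mul, le_div_iff₀ hu]
    nlinarith [sq_nonneg u, sq_nonneg k]

lemma integral_div_sq_add_sq_mul_self (hk : 0 < k) :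
    ∫ u in Ioi 0, u / (u ^ 2 + k ^ 2) * (u / (u ^ 2 + k ^ 2)) = π / (2 * (k + k)) := by
  let g : ℝ → ℝ := fun u ↦ k * arctan (u / k) / (2 * k ^ 2) - u / (2 * (u ^ 2 + k ^ 2))
  have hderiv (x : ℝ) : HasDerivAt g (x / (x ^ 2 + k ^ 2) * (x / (x ^ 2 + k ^ 2))) x := by
    refine (((hasDerivAt_mul_arctan_div k x).div_const _).sub
      (hasDerivAt_div_two_mul_sq_add_sq hk.ne' x)).congr_deriv ?_
    field_simp
    ring
  have hlim : Tendsto g atTop (𝓝 (k * (π / 2) / (2 * k ^ 2) - 0)) :=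
    ((tendsto_mul_arctan_div_atTop hk.le).div_const _).sub (tendsto_div_two_mul_sq_add_sq_atTop k)
  have hzero : g 0 = 0 := by simp [g]
  rw [integral_Ioi_of_hasDerivAt_of_nonneg' (fun x _ ↦ hderiv x) (fun x _ ↦ mul_self_nonneg _)
    hlim, hzero]
  field_simp
  ring

lemma integral_div_sq_add_sq_mul_div_sq_add_sq_of_ne (hk : 0 < k) (hc : 0 ≤ c) (hkc : k ≠ c) :
    ∫ u in Ioi 0, u / (u ^ 2 + k ^ 2) * (u / (u ^ 2 + c ^ 2)) = π / (2 * (k + c)) := by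
  have hsub : k ^ 2 - c ^ 2 ≠ 0 := by
    rw [sq_sub_sq]
    exact mul_ne_zero (by positivity) (sub_ne_zero.mpr hkc)
  let g : ℝ → ℝ := fun u ↦ (k * arctan (u / k) - c * arctan (u / c)) / (k ^ 2 - c ^ 2)
  have hderiv (x : ℝ) : HasDerivAt g
      ((k ^ 2 / (x ^ 2 + k ^ 2) - c ^ 2 / (x ^ 2 + c ^ 2)) / (k ^ 2 - c ^ 2)) x :=
    ((hasDerivAt_mul_arctan_div k x).sub (hasDerivAt_mul_arctan_div c x)).div_const _
  have hderiv_pos : ∀ x ∈ Ioi (0 : ℝ),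
      HasDerivAt g (x / (x ^ 2 + k ^ 2) * (x / (x ^ 2 + c ^ 2))) x := by
    rintro x (hx : 0 < x)
    refine (hderiv x).congr_deriv ?_
    field_simp
    ring
  have hnonneg : ∀ x ∈ Ioi (0 : ℝ), 0 ≤ x / (x ^ 2 + k ^ 2) * (x / (x ^ 2 + c ^ 2)) := by
    rintro x (hx : 0 < x)
    positivity
  have hlim : Tendsto g atTop (𝓝 ((k * (π / 2) - c * (π / 2)) / (k ^ 2 - c ^ 2))) :=
    ((tendsto_mul_arctan_div_atTop hk.le).sub (tendsto_mul_arctan_div_atTop hc)).div_const _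
  have hzero : g 0 = 0 := by simp [g]
  rw [integral_Ioi_of_hasDerivAt_of_nonneg (hderiv 0).continuousAt.continuousWithinAt hderiv_pos
    hnonneg hlim, hzero]
  field_simp
  ring

lemma integral_div_sq_add_sq_mul_div_sq_add_sq (hk : 0 < k) (hc : 0 ≤ c) :
    ∫ u in Ioi 0, u / (u ^ 2 + k ^ 2) * (u / (u ^ 2 + c ^ 2)) = π / (2 * (k + c)) := by
  rcases eq_or_ne k c with rfl | hkc
  · exact integral_div_sq_add_sq_mul_self hk
  · exact integral_div_sq_add_sq_mul_div_sq_add_sq_of_ne hk hc hkc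

lemma integrableOn_div_sq_add_sq_mul_div_sq_add_sq (hk : 0 < k) (hc : 0 ≤ c) :
    IntegrableOn (fun u ↦ u / (u ^ 2 + k ^ 2) * (u / (u ^ 2 + c ^ 2))) (Ioi 0) :=
  .of_integral_ne_zero (by
    rw [integral_div_sq_add_sq_mul_div_sq_add_sq hk hc]
    positivity)

end RationalIntegrals

section NagyKernel

/-- Lebesgue measure on the open quadrant `(0, ∞) × (0, ∞)`. -/
noncomputable abbrev quadrantVolume : Measure (ℝ × ℝ) :=
  (volume.restrict (Ioi 0)).prod (volume.restrict (Ioi 0))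

/-- The density whose integral over the second variable is the extremal kernel of Sz.-Nagy, the
function of smallest `L¹` norm on `(0, ∞)` whose sine transform is `1 / s` for `|s| ≥ 1`. Keeping
the second variable avoids having to evaluate that integral. -/
noncomputable def nagyKernel (p : ℝ × ℝ) : ℝ :=
  sin p.1 * rexp (-p.2 * p.1) * tanh (π * p.2 / 2)

lemma continuous_nagyKernel : Continuous nagyKernel := by
  unfold nagyKernel
  simp only [tanh_eq_sinh_div_cosh]
  exact (by fun_prop : Continuous fun p : ℝ × ℝ ↦ sin p.1 * rexp (-p.2 * p.1)).mul
    ((by fun_prop : Continuous fun p : ℝ × ℝ ↦ sinh (π * p.2 / 2)).div (by fun_prop)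
      fun p ↦ (cosh_pos _).ne')

lemma norm_nagyKernel {u : ℝ} (hu : 0 < u) (t : ℝ) :
    ‖nagyKernel (t, u)‖ = |sin t| * rexp (-u * t) * tanh (π * u / 2) := by
  have htanh : 0 ≤ tanh (π * u / 2) := (tanh_pos_of_pos (by positivity)).le
  rw [nagyKernel, norm_mul, norm_mul, norm_eq_abs, norm_of_nonneg (exp_pos _).le,
    norm_of_nonneg htanh]

lemma integrableOn_nagyKernel_slice {u : ℝ} (hu : 0 < u) :
    IntegrableOn (fun t ↦ nagyKernel (t, u)) (Ioi 0) := by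
  have hcont : Continuous fun t ↦ nagyKernel (t, u) := continuous_nagyKernel.comp (by fun_prop)
  rw [IntegrableOn, ← integrable_norm_iff hcont.aestronglyMeasurable]
  simp only [norm_nagyKernel hu]
  exact (integrableOn_abs_sin_mul_exp hu).mul_const _

lemma integral_norm_nagyKernel_slice {u : ℝ} (hu : 0 < u) :
    ∫ t in Ioi 0, ‖nagyKernel (t, u)‖ = (1 + u ^ 2)⁻¹ := by
  have htanh : tanh (π * u / 2) ≠ 0 := (tanh_pos_of_pos (by positivity)).ne'
  simp only [norm_nagyKernel hu, integral_mul_const, integral_abs_sin_mul_exp_Ioi hu]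
  field_simp

lemma integrable_nagyKernel : Integrable nagyKernel quadrantVolume := by
  rw [integrable_prod_iff' continuous_nagyKernel.aestronglyMeasurable]
  refine ⟨(ae_restrict_mem measurableSet_Ioi).mono fun u hu ↦ integrableOn_nagyKernel_slice hu, ?_⟩
  refine (integrable_inv_one_add_sq.integrableOn (s := Ioi 0)).congr ?_
  exact (ae_restrict_mem measurableSet_Ioi).mono fun u hu ↦
    (integral_norm_nagyKernel_slice hu).symm

lemma integral_norm_nagyKernel : ∫ p, ‖nagyKernel p‖ ∂quadrantVolume = π / 2 := by
  rw [integral_prod_symm _ integrable_nagyKernel.norm,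
    setIntegral_congr_fun measurableSet_Ioi fun u hu ↦ integral_norm_nagyKernel_slice hu,
    integral_Ioi_inv_one_add_sq, arctan_zero, sub_zero]

section Bounded

variable {E : Type*} [NormedAddCommGroup E] [NormedSpace ℝ E] {φ : ℝ → E} {c : ℝ}

lemma norm_nagyKernel_smul_le (hbound : ∀ t, ‖φ t‖ ≤ c) (p : ℝ × ℝ) :
    ‖nagyKernel p • φ p.1‖ ≤ ‖nagyKernel p‖ * c := by
  rw [norm_smul]
  exact mul_le_mul_of_nonneg_left (hbound _) (norm_nonneg _)

lemma integrable_nagyKernel_smul (hφ : Continuous φ) (hbound : ∀ t, ‖φ t‖ ≤ c) :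
    Integrable (fun p ↦ nagyKernel p • φ p.1) quadrantVolume :=
  (integrable_nagyKernel.norm.mul_const c).mono'
    (continuous_nagyKernel.smul (hφ.comp continuous_fst)).aestronglyMeasurable
    (ae_of_all _ (norm_nagyKernel_smul_le hbound))

lemma norm_integral_nagyKernel_smul_le (hbound : ∀ t, ‖φ t‖ ≤ c) :
    ‖∫ p, nagyKernel p • φ p.1 ∂quadrantVolume‖ ≤ π / 2 * c := by
  rw [← integral_norm_nagyKernel, ← integral_mul_const]
  exact norm_integral_le_of_norm_le (integrable_nagyKernel.norm.mul_const c)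
    (ae_of_all _ (norm_nagyKernel_smul_le hbound))

end Bounded

lemma integral_nagyKernel_mul_sin_slice {u : ℝ} (hu : 0 < u) (s : ℝ) :
    ∫ t in Ioi 0, nagyKernel (t, u) * sin (s * t) =
      tanh (π * u / 2) *
        ((u / (u ^ 2 + (s - 1) ^ 2) - u / (u ^ 2 + (s + 1) ^ 2)) / 2) := by
  have hproduct (t : ℝ) : nagyKernel (t, u) * sin (s * t) = tanh (π * u / 2) / 2 *
      (cos ((s - 1) * t) * rexp (-u * t) - cos ((s + 1) * t) * rexp (-u * t)) := by
    rw [nagyKernel, sub_mul, add_mul, one_mul, cos_sub, cos_add]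
    ring
  simp only [hproduct]
  rw [integral_const_mul, integral_sub (integrableOn_cos_mul_exp_Ioi hu _)
    (integrableOn_cos_mul_exp_Ioi hu _), integral_cos_mul_exp_Ioi hu, integral_cos_mul_exp_Ioi hu]
  ring

variable {s : ℝ}

/-- The contribution of the `k`-th partial fraction of `tanh (π * u / 2)` to the sine transform of
`nagyKernel`. -/
noncomputable def sineTransformTerm (s : ℝ) (k : ℕ) (u : ℝ) : ℝ :=
  2 / π * (u / (u ^ 2 + (2 * k + 1) ^ 2) * (u / (u ^ 2 + (s - 1) ^ 2)) -
    u / (u ^ 2 + (2 * k + 1) ^ 2) * (u / (u ^ 2 + (s + 1) ^ 2)))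

lemma hasSum_sineTransformTerm {u : ℝ} (hu : 0 < u) (s : ℝ) :
    HasSum (fun k ↦ sineTransformTerm s k u) (∫ t in Ioi 0, nagyKernel (t, u) * sin (s * t)) := by
  rw [integral_nagyKernel_mul_sin_slice hu]
  have hterm (k : ℕ) : sineTransformTerm s k u = 4 / π * (u / (u ^ 2 + (2 * k + 1) ^ 2)) *
      ((u / (u ^ 2 + (s - 1) ^ 2) - u / (u ^ 2 + (s + 1) ^ 2)) / 2) := by
    rw [sineTransformTerm]
    ring
  simp only [hterm]
  exact (hasSum_tanh u).mul_right _

lemma sineTransformTerm_nonneg (hs : 1 ≤ s) (k : ℕ) {u : ℝ} (hu : 0 < u) :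
    0 ≤ sineTransformTerm s k u := by
  have hle : u / (u ^ 2 + (s + 1) ^ 2) ≤ u / (u ^ 2 + (s - 1) ^ 2) := by
    gcongr
    nlinarith
  rw [sineTransformTerm, ← mul_sub]
  exact mul_nonneg (by positivity) (mul_nonneg (by positivity) (sub_nonneg.mpr hle))

lemma integrableOn_sineTransformTerm (hs : 1 ≤ s) (k : ℕ) :
    IntegrableOn (sineTransformTerm s k) (Ioi 0) :=
  ((integrableOn_div_sq_add_sq_mul_div_sq_add_sq (by positivity) (by linarith)).sub
    (integrableOn_div_sq_add_sq_mul_div_sq_add_sq (by positivity) (by linarith))).const_mul _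

lemma integral_sineTransformTerm (hs : 1 ≤ s) (k : ℕ) :
    ∫ u in Ioi 0, sineTransformTerm s k u =
      (s + 2 * k)⁻¹ - (s + 2 * (k + 1 : ℕ))⁻¹ := by
  have hk : (0 : ℝ) < 2 * k + 1 := by positivity
  simp only [sineTransformTerm]
  rw [integral_const_mul, integral_sub
      (integrableOn_div_sq_add_sq_mul_div_sq_add_sq hk (by linarith))
      (integrableOn_div_sq_add_sq_mul_div_sq_add_sq hk (by linarith)),
    integral_div_sq_add_sq_mul_div_sq_add_sq hk (by linarith),
    integral_div_sq_add_sq_mul_div_sq_add_sq hk (by linarith),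
    show 2 * (k : ℝ) + 1 + (s - 1) = s + 2 * k by ring]
  push_cast
  rw [show 2 * (k : ℝ) + 1 + (s + 1) = s + 2 * (k + 1) by ring]
  field_simp

lemma hasSum_integral_sineTransformTerm (hs : 1 ≤ s) :
    HasSum (fun k ↦ ∫ u in Ioi 0, sineTransformTerm s k u) s⁻¹ := by
  rw [hasSum_iff_tendsto_nat_of_nonneg fun k ↦
    setIntegral_nonneg measurableSet_Ioi fun u hu ↦ sineTransformTerm_nonneg hs k hu]
  simp only [integral_sineTransformTerm hs,
    Finset.sum_range_sub' fun k : ℕ ↦ (s + 2 * (k : ℝ))⁻¹]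
  have hlim : Tendsto (fun n : ℕ ↦ (s + 2 * (n : ℝ))⁻¹) atTop (𝓝 0) :=
    (tendsto_atTop_add_const_left _ _
      (tendsto_natCast_atTop_atTop.const_mul_atTop two_pos)).inv_tendsto_atTop
  simpa using hlim.const_sub s⁻¹

lemma integrable_nagyKernel_mul_sin (s : ℝ) :
    Integrable (fun p ↦ nagyKernel p * sin (s * p.1)) quadrantVolume :=
  integrable_nagyKernel_smul (φ := fun t ↦ sin (s * t)) (by fun_prop) fun t ↦ abs_sin_le_one (s * t)

lemma integral_nagyKernel_mul_sin_of_one_le (hs : 1 ≤ s) :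
    ∫ p, nagyKernel p * sin (s * p.1) ∂quadrantVolume = s⁻¹ := by
  have hnorm (k : ℕ) : ∫ u in Ioi 0, ‖sineTransformTerm s k u‖ =
      ∫ u in Ioi 0, sineTransformTerm s k u :=
    setIntegral_congr_fun measurableSet_Ioi fun u hu ↦
      norm_of_nonneg (sineTransformTerm_nonneg hs k hu)
  have hsummable : Summable fun k ↦ ∫ u in Ioi 0, ‖sineTransformTerm s k u‖ := by
    simpa only [hnorm] using (hasSum_integral_sineTransformTerm hs).summable
  rw [integral_prod_symm _ (integrable_nagyKernel_mul_sin s),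
    setIntegral_congr_fun measurableSet_Ioi fun u hu ↦ (hasSum_sineTransformTerm hu s).tsum_eq.symm]
  exact (hasSum_integral_of_summable_integral_norm (integrableOn_sineTransformTerm hs)
    hsummable).unique (hasSum_integral_sineTransformTerm hs)

lemma integral_nagyKernel_mul_sin (hs : 1 ≤ |s|) :
    ∫ p, nagyKernel p * sin (s * p.1) ∂quadrantVolume = s⁻¹ := by
  rcases le_abs.mp hs with hs | hs
  · exact integral_nagyKernel_mul_sin_of_one_le hs
  · have hneg := integral_nagyKernel_mul_sin_of_one_le hs
    simpa only [neg_mul, sin_neg, mul_neg, integral_neg, inv_neg, neg_inj] using hneg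

end NagyKernel

section SineMultiplier

open scoped Matrix.Norms.L2Operator

variable {m n : Type*}

/-- The Schur multiplier with symbol `sin (b j - a i)`, applied to the matrix `C`. -/
noncomputable def sineMultiplier (a : m → ℝ) (b : n → ℝ) (C : Matrix m n ℂ) : Matrix m n ℂ :=
  Matrix.of fun i j ↦ (sin (b j - a i) : ℝ) * C i j

lemma continuous_sineMultiplier_smul (a : m → ℝ) (b : n → ℝ) (C : Matrix m n ℂ) :
    Continuous fun t : ℝ ↦ sineMultiplier (t • a) (t • b) C := by
  refine continuous_matrix fun i j ↦ ?_
  simp only [sineMultiplier, Matrix.of_apply, Pi.smul_apply, smul_eq_mul]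
  fun_prop

/-- The diagonal unitary matrix `exp (i a)`. -/
noncomputable def phaseMatrix [DecidableEq m] (a : m → ℝ) : Matrix m m ℂ :=
  Matrix.diagonal fun i ↦ Complex.exp (a i * Complex.I)

variable [Fintype m] [Fintype n] [DecidableEq n]

lemma l2_opNorm_diagonal_le_one {d : n → ℂ} (hd : ∀ i, ‖d i‖ ≤ 1) :
    ‖Matrix.diagonal d‖ ≤ 1 := by
  rw [Matrix.l2_opNorm_diagonal]
  exact (pi_norm_le_iff_of_nonneg zero_le_one).mpr hd

lemma l2_opNorm_mul_mul_le [DecidableEq m] {U : Matrix m m ℂ} {V : Matrix n n ℂ}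
    (hU : ‖U‖ ≤ 1) (hV : ‖V‖ ≤ 1) (X : Matrix m n ℂ) : ‖U * X * V‖ ≤ ‖X‖ := by
  calc ‖U * X * V‖ ≤ ‖U‖ * ‖X‖ * ‖V‖ :=
        (Matrix.l2_opNorm_mul _ _).trans
          (mul_le_mul_of_nonneg_right (Matrix.l2_opNorm_mul _ _) (norm_nonneg _))
    _ ≤ 1 * ‖X‖ * 1 := by gcongr
    _ = ‖X‖ := by rw [one_mul, mul_one]

lemma norm_phaseMatrix_le_one (a : n → ℝ) : ‖phaseMatrix a‖ ≤ 1 :=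
  l2_opNorm_diagonal_le_one fun i ↦ (Complex.norm_exp_ofReal_mul_I (a i)).le

lemma sineMultiplier_eq_phaseMatrix_mul_mul [DecidableEq m] (a : m → ℝ) (b : n → ℝ)
    (C : Matrix m n ℂ) :
    sineMultiplier a b C = (-Complex.I / 2) •
      (phaseMatrix (-a) * C * phaseMatrix b - phaseMatrix a * C * phaseMatrix (-b)) := by
  ext i j
  simp only [sineMultiplier, phaseMatrix, Matrix.of_apply, Matrix.smul_apply, Matrix.sub_apply,
    Matrix.mul_diagonal, Matrix.diagonal_mul, smul_eq_mul, Pi.neg_apply, Complex.sin,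
    Complex.ofReal_sin, Complex.ofReal_neg, Complex.ofReal_sub, neg_sub, neg_mul, sub_mul,
    Complex.exp_sub, Complex.exp_neg]
  ring

lemma norm_sineMultiplier_le (a : m → ℝ) (b : n → ℝ) (C : Matrix m n ℂ) :
    ‖sineMultiplier a b C‖ ≤ ‖C‖ := by
  classical
  have hbound (x : m → ℝ) (y : n → ℝ) : ‖phaseMatrix x * C * phaseMatrix y‖ ≤ ‖C‖ :=
    l2_opNorm_mul_mul_le (norm_phaseMatrix_le_one x) (norm_phaseMatrix_le_one y) C
  have hscalar : ‖-Complex.I / 2‖ = 1 / 2 := by simp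
  calc ‖sineMultiplier a b C‖ ≤ 1 / 2 * (‖C‖ + ‖C‖) := by
        rw [sineMultiplier_eq_phaseMatrix_mul_mul, norm_smul, hscalar]
        gcongr
        exact (norm_sub_le _ _).trans (add_le_add (hbound _ _) (hbound _ _))
    _ = ‖C‖ := by ring

lemma integral_nagyKernel_smul_sineMultiplier_apply (a : m → ℝ) (b : n → ℝ) (C : Matrix m n ℂ)
    (i : m) (j : n) :
    (∫ p, nagyKernel p • sineMultiplier (p.1 • a) (p.1 • b) C ∂quadrantVolume) i j =
      (∫ p, nagyKernel p * sin ((b j - a i) * p.1) ∂quadrantVolume : ℝ) * C i j := by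
  have hint := integrable_nagyKernel_smul (continuous_sineMultiplier_smul a b C)
    fun t ↦ norm_sineMultiplier_le (t • a) (t • b) C
  let entry : Matrix m n ℂ →L[ℝ] ℂ := (Matrix.entryLinearMap ℝ ℂ i j).toContinuousLinearMap
  have hentry (p : ℝ × ℝ) : entry (nagyKernel p • sineMultiplier (p.1 • a) (p.1 • b) C) =
      (nagyKernel p * sin ((b j - a i) * p.1) : ℝ) * C i j := by
    change nagyKernel p • ((sin (p.1 * b j - p.1 * a i) : ℝ) * C i j) = _
    rw [← mul_sub, mul_comm p.1, Complex.real_smul, Complex.ofReal_mul, mul_assoc]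
  change entry _ = _
  rw [← entry.integral_comp_comm hint]
  simp only [hentry]
  rw [integral_mul_const, integral_complex_ofReal]

end SineMultiplier

section SylvesterBound

open scoped Matrix.Norms.L2Operator

variable {m n : Type*} [Fintype m] [Fintype n] [DecidableEq m] [DecidableEq n]

lemma mul_l2_opNorm_le_of_diagonal_sylvester {a : m → ℝ} {b : n → ℝ} {X : Matrix m n ℂ} {δ : ℝ}
    (hδ : 0 < δ) (hgap : ∀ i j, X i j ≠ 0 → δ ≤ |a i - b j|) :
    δ * ‖X‖ ≤ π / 2 * ‖X * Matrix.diagonal (fun j ↦ (b j : ℂ)) -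
      Matrix.diagonal (fun i ↦ (a i : ℂ)) * X‖ := by
  set C := X * Matrix.diagonal (fun j ↦ (b j : ℂ)) - Matrix.diagonal (fun i ↦ (a i : ℂ)) * X
  have hC (i : m) (j : n) : C i j = (b j - a i : ℝ) * X i j := by
    simp only [C, Matrix.sub_apply, Matrix.mul_diagonal, Matrix.diagonal_mul, Complex.ofReal_sub]
    ring
  have hX : δ • X = ∫ p, nagyKernel p •
      sineMultiplier (p.1 • δ⁻¹ • a) (p.1 • δ⁻¹ • b) C ∂quadrantVolume := by
    ext i j
    have hscale : (δ⁻¹ • b) j - (δ⁻¹ • a) i = (b j - a i) / δ := by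
      rw [Pi.smul_apply, Pi.smul_apply, ← smul_sub, smul_eq_mul, div_eq_inv_mul]
    rw [integral_nagyKernel_smul_sineMultiplier_apply, hC, hscale, Matrix.smul_apply,
      Complex.real_smul]
    rcases eq_or_ne (X i j) 0 with hXij | hXij
    · simp only [hXij, mul_zero]
    · have hij : δ ≤ |b j - a i| := abs_sub_comm (a i) (b j) ▸ hgap i j hXij
      have hne : b j - a i ≠ 0 := abs_pos.mp (hδ.trans_le hij)
      have hone : 1 ≤ |(b j - a i) / δ| := by rwa [abs_div, abs_of_pos hδ, one_le_div hδ]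
      rw [integral_nagyKernel_mul_sin hone, ← mul_assoc, ← Complex.ofReal_mul, inv_div,
        div_mul_cancel₀ _ hne]
  calc δ * ‖X‖ = ‖δ • X‖ := by rw [norm_smul, norm_of_nonneg hδ.le]
    _ ≤ π / 2 * ‖C‖ := by
      rw [hX]
      exact norm_integral_nagyKernel_smul_le
        (φ := fun t ↦ sineMultiplier (t • δ⁻¹ • a) (t • δ⁻¹ • b) C)
        fun t ↦ norm_sineMultiplier_le _ _ C

lemma norm_le_one_of_mem_unitary {E : Type*} [NormedRing E] [StarRing E] [CStarRing E] {U : E}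
    (hU : U ∈ unitary E) : ‖U‖ ≤ 1 := by
  rcases subsingleton_or_nontrivial E with hE | hE
  · rw [Subsingleton.elim U 0, norm_zero]
    exact zero_le_one
  · exact (CStarRing.norm_of_mem_unitary hU).le

/-- The matrix of `X` with respect to the eigenvector bases of the Hermitian matrices `B` (source)
and `A` (target). -/
noncomputable def inEigenbases {A : Matrix m m ℂ} {B : Matrix n n ℂ} (hA : A.IsHermitian)
    (hB : B.IsHermitian) (X : Matrix m n ℂ) : Matrix m n ℂ :=
  (↑(star hA.eigenvectorUnitary) : Matrix m m ℂ) * X * (↑hB.eigenvectorUnitary : Matrix n n ℂ)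

variable {A : Matrix m m ℂ} {B : Matrix n n ℂ} (hA : A.IsHermitian) (hB : B.IsHermitian)

lemma inEigenbases_sub (X Y : Matrix m n ℂ) :
    inEigenbases hA hB (X - Y) = inEigenbases hA hB X - inEigenbases hA hB Y := by
  rw [inEigenbases, Matrix.mul_sub, Matrix.sub_mul, inEigenbases, inEigenbases]

lemma inEigenbases_self :
    inEigenbases hA hA A = Matrix.diagonal fun i ↦ (hA.eigenvalues i : ℂ) := by
  rw [inEigenbases, Unitary.coe_star, ← Unitary.conjStarAlgAut_star_apply (S := ℂ)]
  exact hA.conjStarAlgAut_star_eigenvectorUnitary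

lemma inEigenbases_mul {l : Type*} [Fintype l] [DecidableEq l] {C : Matrix l l ℂ}
    (hC : C.IsHermitian) (X : Matrix m n ℂ) (Y : Matrix n l ℂ) :
    inEigenbases hA hC (X * Y) = inEigenbases hA hB X * inEigenbases hB hC Y := by
  simp only [inEigenbases, Matrix.mul_assoc]
  rw [← Matrix.mul_assoc (↑hB.eigenvectorUnitary : Matrix n n ℂ), Unitary.coe_mul_star_self,
    Matrix.one_mul]

lemma eigenvectorUnitary_mul_inEigenbases_mul_star (X : Matrix m n ℂ) :
    (↑hA.eigenvectorUnitary : Matrix m m ℂ) * inEigenbases hA hB X *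
      (↑(star hB.eigenvectorUnitary) : Matrix n n ℂ) = X := by
  rw [inEigenbases, Matrix.mul_assoc, Matrix.mul_assoc (_ * X), Unitary.coe_mul_star_self,
    Matrix.mul_one, ← Matrix.mul_assoc, Unitary.coe_mul_star_self, Matrix.one_mul]

lemma inEigenbases_injective : Function.Injective (inEigenbases hA hB) := fun X Y h ↦ by
  rw [← eigenvectorUnitary_mul_inEigenbases_mul_star hA hB X, h,
    eigenvectorUnitary_mul_inEigenbases_mul_star]

lemma l2_opNorm_inEigenbases (X : Matrix m n ℂ) : ‖inEigenbases hA hB X‖ = ‖X‖ := by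
  have hU := norm_le_one_of_mem_unitary hA.eigenvectorUnitary.2
  have hU_star := norm_le_one_of_mem_unitary (star hA.eigenvectorUnitary).2
  have hV := norm_le_one_of_mem_unitary hB.eigenvectorUnitary.2
  have hV_star := norm_le_one_of_mem_unitary (star hB.eigenvectorUnitary).2
  apply le_antisymm
  · exact l2_opNorm_mul_mul_le hU_star hV X
  · conv_lhs => rw [← eigenvectorUnitary_mul_inEigenbases_mul_star hA hB X]
    exact l2_opNorm_mul_mul_le hU hV_star _

lemma mul_l2_opNorm_le_of_sylvester {X : Matrix m n ℂ} {δ : ℝ} (hδ : 0 < δ)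
    (hgap : ∀ i j, inEigenbases hA hB X i j ≠ 0 →
      δ ≤ |hA.eigenvalues i - hB.eigenvalues j|) :
    δ * ‖X‖ ≤ π / 2 * ‖X * B - A * X‖ := by
  have h := mul_l2_opNorm_le_of_diagonal_sylvester hδ hgap
  rwa [← inEigenbases_self hB, ← inEigenbases_self hA, ← inEigenbases_mul,
    ← inEigenbases_mul, ← inEigenbases_sub, l2_opNorm_inEigenbases,
    l2_opNorm_inEigenbases] at h

end SylvesterBound

section SpectralProj

open scoped Matrix.Norms.L2Operator

variable {m n : ℕ} {A : Matrix (Fin m) (Fin m) ℂ} {B : Matrix (Fin n) (Fin n) ℂ}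

lemma inEigenbases_spectralProj (hA : A.IsHermitian) (ω : Set ℝ) :
    inEigenbases hA hA (spectralProj hA ω) =
      Matrix.diagonal fun i ↦ if hA.eigenvalues i ∈ ω then (1 : ℂ) else 0 := by
  have hU := Unitary.coe_star_mul_self hA.eigenvectorUnitary
  rw [inEigenbases, spectralProj, Unitary.coe_star, mul_assoc, mul_assoc, hU, mul_one,
    ← mul_assoc, hU, one_mul]

lemma commute_spectralProj (hA : A.IsHermitian) (ω : Set ℝ) : Commute (spectralProj hA ω) A := by
  apply inEigenbases_injective hA hA
  rw [inEigenbases_mul hA hA hA, inEigenbases_mul hA hA hA, inEigenbases_spectralProj,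
    inEigenbases_self]
  exact Matrix.commute_diagonal _ _

lemma norm_spectralProj_le_one (hA : A.IsHermitian) (ω : Set ℝ) : ‖spectralProj hA ω‖ ≤ 1 := by
  rw [← l2_opNorm_inEigenbases hA hA, inEigenbases_spectralProj]
  refine l2_opNorm_diagonal_le_one fun i ↦ ?_
  split_ifs
  · exact norm_one.le
  · exact norm_zero.trans_le zero_le_one

lemma mem_of_inEigenbases_spectralProj_mul_mul_ne_zero (hA : A.IsHermitian) (hB : B.IsHermitian)
    {ω Ω : Set ℝ} {X : Matrix (Fin m) (Fin n) ℂ} {i : Fin m} {j : Fin n}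
    (h : inEigenbases hA hB (spectralProj hA ω * X * spectralProj hB Ω) i j ≠ 0) :
    hA.eigenvalues i ∈ ω ∧ hB.eigenvalues j ∈ Ω := by
  rw [inEigenbases_mul hA hB hB, inEigenbases_mul hA hA hB, inEigenbases_spectralProj,
    inEigenbases_spectralProj, Matrix.mul_diagonal, Matrix.diagonal_mul] at h
  exact ⟨of_not_not fun hi ↦ h (by rw [if_neg hi, zero_mul, zero_mul]),
    of_not_not fun hj ↦ h (by rw [if_neg hj, mul_zero])⟩

lemma spectralProj_mul_mul_sylvester (hA : A.IsHermitian) (hB : B.IsHermitian) (ω Ω : Set ℝ)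
    (X : Matrix (Fin m) (Fin n) ℂ) :
    spectralProj hA ω * X * spectralProj hB Ω * B -
        A * (spectralProj hA ω * X * spectralProj hB Ω) =
      spectralProj hA ω * (X * B - A * X) * spectralProj hB Ω := by
  rw [Matrix.mul_assoc _ _ B, (commute_spectralProj hB Ω).eq, ← Matrix.mul_assoc,
    ← Matrix.mul_assoc A, ← Matrix.mul_assoc A, ← (commute_spectralProj hA ω).eq, Matrix.mul_sub,
    Matrix.sub_mul, Matrix.mul_assoc _ X B, Matrix.mul_assoc _ A X]

theorem spectral_proj_sylvester_bound_general (hA : A.IsHermitian) (hB : B.IsHermitian)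
    (X : Matrix (Fin m) (Fin n) ℂ) (ω Ω : Set ℝ) (δ : ℝ) (hδ : 0 < δ)
    (hdist : ∀ a ∈ ω, ∀ b ∈ Ω, δ ≤ |a - b|) :
    spectralProj hA ω * X * spectralProj hB Ω * B - A * (spectralProj hA ω * X * spectralProj hB Ω)
        = spectralProj hA ω * (X * B - A * X) * spectralProj hB Ω ∧
      δ * ‖spectralProj hA ω * X * spectralProj hB Ω‖ ≤ π / 2 * ‖X * B - A * X‖ := by
  have hsylvester := spectralProj_mul_mul_sylvester hA hB ω Ω X
  refine ⟨hsylvester, ?_⟩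
  have hgap (i : Fin m) (j : Fin n)
      (hij : inEigenbases hA hB (spectralProj hA ω * X * spectralProj hB Ω) i j ≠ 0) :
      δ ≤ |hA.eigenvalues i - hB.eigenvalues j| :=
    have ⟨hi, hj⟩ := mem_of_inEigenbases_spectralProj_mul_mul_ne_zero hA hB hij
    hdist _ hi _ hj
  calc δ * ‖spectralProj hA ω * X * spectralProj hB Ω‖
      ≤ π / 2 * ‖spectralProj hA ω * (X * B - A * X) * spectralProj hB Ω‖ :=
        hsylvester ▸ mul_l2_opNorm_le_of_sylvester hA hB hδ hgap
    _ ≤ π / 2 * ‖X * B - A * X‖ := by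
        gcongr
        exact l2_opNorm_mul_mul_le (norm_spectralProj_le_one hA ω)
          (norm_spectralProj_le_one hB Ω) _

end SpectralProj

/-- Let `A`, `B` be Hermitian matrices, `ω` a set of eigenvalues of `A`, `Ω` a set of
eigenvalues of `B` with `dist(ω, Ω) ≥ δ > 0`, and let `P`, `Q` be the spectral
projections of `A`, `B` onto the eigenspaces corresponding to `ω`, `Ω`. Then
`X = PQ` solves the Sylvester equation `X B − A X = P (B − A) Q` (in full-space
form), and consequently `δ ‖PQ‖ ≤ (π/2) ‖B − A‖` (operator norms). -/
theorem spectral_proj_sylvester_bound {m : ℕ}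
    {A B : Matrix (Fin m) (Fin m) ℂ} (hA : A.IsHermitian) (hB : B.IsHermitian)
    (ω Ω : Set ℝ) (hω : ω ⊆ Set.range hA.eigenvalues)
    (hΩ : Ω ⊆ Set.range hB.eigenvalues)
    (δ : ℝ) (hδ : 0 < δ) (hdist : ∀ a ∈ ω, ∀ b ∈ Ω, δ ≤ |a - b|) :
    (spectralProj hA ω * spectralProj hB Ω) * B - A * (spectralProj hA ω * spectralProj hB Ω)
        = spectralProj hA ω * (B - A) * spectralProj hB Ω ∧
      δ * ‖Matrix.toEuclideanCLM (𝕜 := ℂ) (spectralProj hA ω * spectralProj hB Ω)‖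
        ≤ π / 2 * ‖Matrix.toEuclideanCLM (𝕜 := ℂ) (B - A)‖ := by
  simpa only [mul_one, one_mul, Matrix.cstar_norm_def] using
    spectral_proj_sylvester_bound_general hA hB 1 ω Ω δ hδ hdist
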